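/- arXiv:2406.09049 — 3 statements merged into one kernel-verified Lean document; each statement's English description precedes it below -/
import Mathlib

section
/- Let G and G' be bow-free acyclic path diagrams on the same finite vertex type V. Then the closure of M(G) in the Euclidean topology on Matrix V V ℝ is contained in the Euclidean closure of M(G') if and only if A(G) ⊆ A(G'). (Theorem 4 of the paper.) -/
open Matrix

structure MixedGraph (V : Type*) where
  D : V → V → Prop
  B : V → V → Prop
  symm : ∀ v w, B v w → B w v
  irrefl : ∀ v, ¬ B v v

namespace MixedGraph

variable {V : Type*}

/-- The graph is acyclic: no directed cycles. -/
def Acyclic (G : MixedGraph V) : Prop := ∀ v, ¬ Relation.TransGen G.D v v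

/-- The graph is simple: for distinct `v, w`, at most one of
`D v w`, `D w v`, `B v w` holds. -/
def Simple (G : MixedGraph V) : Prop :=
  ∀ v w, v ≠ w →
    ¬ (G.D v w ∧ G.D w v) ∧ ¬ (G.D v w ∧ G.B v w) ∧ ¬ (G.D w v ∧ G.B v w)

/-- A bow-free acyclic path diagram: a simple acyclic mixed graph. -/
def IsBAP (G : MixedGraph V) : Prop := G.Acyclic ∧ G.Simple

/-- `Λ` is compatible with `G`. -/
def LamCompat (G : MixedGraph V) (Λ : Matrix V V ℝ) : Prop :=
  ∀ v w, ¬ G.D v w → Λ v w = 0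

/-- `Ω` is compatible with `G`. -/
def OmCompat [Fintype V] (G : MixedGraph V) (Ω : Matrix V V ℝ) : Prop :=
  Ω.PosDef ∧ ∀ v w, v ≠ w → ¬ G.B v w → ¬ G.B w v → Ω v w = 0

/-- The model `M(G)` of a mixed graph. -/
def model [Fintype V] [DecidableEq V] (G : MixedGraph V) : Set (Matrix V V ℝ) :=
  {S | ∃ Λ Ω : Matrix V V ℝ, G.LamCompat Λ ∧ G.OmCompat Ω ∧
    S = ((1 - Λ)⁻¹)ᵀ * Ω * (1 - Λ)⁻¹}

/-- The algebraic model `A(G)`: the real Zariski closure of `M(G)`. -/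
def algModel [Fintype V] [DecidableEq V] (G : MixedGraph V) : Set (Matrix V V ℝ) :=
  {S | ∀ p : MvPolynomial (V × V) ℝ,
    (∀ T ∈ G.model, MvPolynomial.eval (fun e => T e.1 e.2) p = 0) →
    MvPolynomial.eval (fun e => S e.1 e.2) p = 0}

/-- The skeleton (adjacency relation) of `G`. -/
def adj (G : MixedGraph V) (v w : V) : Prop :=
  v ≠ w ∧ (G.D v w ∨ G.D w v ∨ G.B v w)

/-- A collider triple of `G`. -/
def ColliderTriple (G : MixedGraph V) (u v w : V) : Prop :=
  u ≠ v ∧ v ≠ w ∧ u ≠ w ∧ (G.D u v ∨ G.B u v) ∧ (G.D w v ∨ G.B w v)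

/-- A v-structure of `G`. -/
def VStructure (G : MixedGraph V) (u v w : V) : Prop :=
  G.ColliderTriple u v w ∧ ¬ G.adj u w

end MixedGraph

/-!
Closures in the Euclidean topology are contained in closures in the Zariski topology, which gives
one direction.

For the converse, let `S` belong to `M(G')` and write `(1 - Λ)ᵀ * S * (1 - Λ) = Ω`. If `u` is a
parent of `v`, then `Ω u v = 0` because `G'` is bow-free. Once the columns of `Λ` at the parents of
`v` are known, these equations are linear in column `v`, so that the columns of `Λ` can be
recovered from `S`, one after the other along the directed edges, by Cramer's rule. This writes `Λ`
as a matrix of rational functions of `S` that are defined at the identity matrix. Compatibility of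
`Λ` and `Ω` with `G'` then amounts to polynomial equations in `S`, so that every positive
semidefinite point of `A(G')` outside some hypersurface `Q = 0` with `Q(1) ≠ 0` belongs to `M(G')`.
Finally, each point of `M(G)` is the end of a polynomial path in `M(G)` that starts at the identity
matrix, and such a path meets the hypersurface in only finitely many points.
-/

open scoped Polynomial Topology

section Polynomial

variable {R : Type*} [CommRing R]

lemma eventually_nhdsNE_eval_ne_zero [IsDomain R] [TopologicalSpace R] [T1Space R] {p : R[X]}
    (hp : p ≠ 0) (a : R) : ∀ᶠ t in 𝓝[≠] a, p.eval t ≠ 0 :=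
  nhdsNE_le_cofinite a (Polynomial.finite_setOfPred_isRoot hp).compl_mem_cofinite

/-- Evaluation of a polynomial at the entries of a matrix. -/
noncomputable abbrev evalEntries {V : Type*} (S : Matrix V V R) : MvPolynomial (V × V) R →+* R :=
  MvPolynomial.eval fun e => S e.1 e.2

lemma eval_aeval_entries {V : Type*} (P : Matrix V V R[X]) (q : MvPolynomial (V × V) R) (t : R) :
    (MvPolynomial.aeval (fun e => P e.1 e.2) q).eval t =
      evalEntries (P.map (Polynomial.eval t)) q := by
  rw [← Polynomial.coe_evalRingHom, MvPolynomial.map_aeval]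
  congr 2
  ext; simp

end Polynomial

section Matrix

variable {V R : Type*} [Fintype V] [DecidableEq V] [CommRing R]

lemma eq_transpose_inv_mul_mul_inv_iff {A S Ω : Matrix V V R} (hA : IsUnit A) :
    S = (A⁻¹)ᵀ * Ω * A⁻¹ ↔ Ω = Aᵀ * S * A := by
  let := hA.invertible
  rw [eq_comm, mul_inv_eq_iff_eq_mul_of_invertible, transpose_nonsing_inv,
    inv_mul_eq_iff_eq_mul_of_invertible, Matrix.mul_assoc]

/-- The path `t ↦ adj(1 - tΛ)ᵀ (tΩ + (1 - t)1) adj(1 - tΛ)` from the identity matrix to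
`adj(1 - Λ)ᵀ Ω adj(1 - Λ)`, as a matrix of polynomials in `t`. Adjugates take the place of
inverses to make it polynomial; the missing determinants can be absorbed into `Ω`. -/
noncomputable def adjugatePath (L Ω : Matrix V V R) : Matrix V V R[X] :=
  (1 - (Polynomial.X : R[X]) • L.map Polynomial.C).adjugateᵀ *
    ((Polynomial.X : R[X]) • Ω.map Polynomial.C + (1 - Polynomial.X : R[X]) • 1) *
    (1 - (Polynomial.X : R[X]) • L.map Polynomial.C).adjugate

lemma map_eval_one_sub_X_smul {V R : Type*} [DecidableEq V] [CommRing R]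
    (L : Matrix V V R) (t : R) :
    (1 - (Polynomial.X : R[X]) • L.map Polynomial.C).map (Polynomial.eval t) = 1 - t • L := by
  ext i j
  by_cases hij : i = j <;> simp [one_apply, hij, mul_comm t]

lemma map_eval_adjugatePath (L Ω : Matrix V V R) (t : R) :
    (adjugatePath L Ω).map (Polynomial.eval t) =
      (1 - t • L).adjugateᵀ * (t • Ω + (1 - t) • 1) * (1 - t • L).adjugate := by
  have hmid : ((Polynomial.X : R[X]) • Ω.map Polynomial.C +
      (1 - Polynomial.X : R[X]) • 1).map (Polynomial.eval t) = t • Ω + (1 - t) • 1 := by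
    ext i j
    by_cases hij : i = j <;> simp [one_apply, hij, mul_comm t]
  have hadj : (1 - (Polynomial.X : R[X]) • L.map Polynomial.C).adjugate.map (Polynomial.eval t) =
      (1 - t • L).adjugate := by
    rw [← Polynomial.coe_evalRingHom, ← RingHom.mapMatrix_apply, RingHom.map_adjugate,
      RingHom.mapMatrix_apply, Polynomial.coe_evalRingHom, map_eval_one_sub_X_smul]
  rw [← Polynomial.coe_evalRingHom] at hmid hadj ⊢
  rw [adjugatePath, Matrix.map_mul, Matrix.map_mul, hmid, transpose_map, hadj]

/-- If `n u / d u` is a rational formula for column `u` of `Λ`, then row `u` of this matrix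
represents row `u` of `(1 - Λ)ᵀ` multiplied by `d u`. -/
noncomputable def clearedOneSub {V R : Type*} [DecidableEq V] [CommRing R]
    (d : V → MvPolynomial (V × V) R) (n : V → V → MvPolynomial (V × V) R) :
    Matrix V V (MvPolynomial (V × V) R) :=
  diagonal d - of n

lemma evalEntries_clearedOneSub {V R : Type*} [DecidableEq V] [CommRing R] {S L : Matrix V V R}
    {d : V → MvPolynomial (V × V) R} {n : V → V → MvPolynomial (V × V) R} {u : V}
    (h : ∀ k, evalEntries S (d u) * L k u = evalEntries S (n u k)) (k : V) :
    evalEntries S (clearedOneSub d n u k) = evalEntries S (d u) * (1 - L)ᵀ u k := by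
  obtain rfl | huk := eq_or_ne u k
  · simp [clearedOneSub, ← h, mul_sub]
  · simp [clearedOneSub, ← h, huk, huk.symm]

variable {S L : Matrix V V R} {d : V → MvPolynomial (V × V) R}
  {n : V → V → MvPolynomial (V × V) R}

lemma evalEntries_clearedOneSub_mul_mvPolynomialX {u : V}
    (h : ∀ k, evalEntries S (d u) * L k u = evalEntries S (n u k)) (w : V) :
    evalEntries S ((clearedOneSub d n * mvPolynomialX V V R) u w) =
      evalEntries S (d u) * ((1 - L)ᵀ * S : Matrix V V R) u w := by
  simp only [mul_apply, map_sum, map_mul, evalEntries_clearedOneSub h, mvPolynomialX_apply,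
    MvPolynomial.eval_X, Finset.mul_sum, mul_assoc]

lemma evalEntries_clearedOneSub_mul_mul_transpose
    (h : ∀ u k, evalEntries S (d u) * L k u = evalEntries S (n u k)) (v w : V) :
    evalEntries S ((clearedOneSub d n * mvPolynomialX V V R * (clearedOneSub d n)ᵀ) v w) =
      evalEntries S (d v) * evalEntries S (d w) *
        ((1 - L)ᵀ * S * (1 - L) : Matrix V V R) v w := by
  rw [mul_apply, mul_apply, map_sum, Finset.mul_sum]
  refine Finset.sum_congr rfl fun k _ => ?_
  rw [map_mul, evalEntries_clearedOneSub_mul_mvPolynomialX (h v), transpose_apply,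
    evalEntries_clearedOneSub (h w), transpose_apply]
  ring

end Matrix

namespace MixedGraph

lemma Acyclic.wellFounded {V : Type*} [Finite V] {G : MixedGraph V} (hG : G.Acyclic) :
    WellFounded G.D := by
  have : Std.Irrefl (Relation.TransGen G.D) := ⟨hG⟩
  exact Subrelation.wf Relation.TransGen.single
    (Finite.wellFounded_of_trans_of_irrefl (Relation.TransGen G.D))

variable {V : Type*} [Fintype V] [DecidableEq V] {G G' : MixedGraph V}

section Zariski

lemma model_subset_algModel : G.model ⊆ G.algModel := fun S hS _ hp => hp S hS

lemma algModel_subset_algModel_iff : G.algModel ⊆ G'.algModel ↔ G.model ⊆ G'.algModel :=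
  ⟨model_subset_algModel.trans, fun h _ hS p hp => hS p fun _ hT => h hT p hp⟩

lemma isClosed_algModel : IsClosed G.algModel := by
  simp only [algModel, Set.ofPred_forall]
  refine isClosed_iInter fun p => isClosed_iInter fun _ => isClosed_eq ?_ continuous_const
  exact (MvPolynomial.continuous_eval p).comp
    (continuous_pi fun e => continuous_apply_apply e.1 e.2)

lemma closure_model_subset_algModel : closure G.model ⊆ G.algModel :=
  closure_minimal model_subset_algModel isClosed_algModel

end Zariski

section Model

lemma posSemidef_of_mem_model {S : Matrix V V ℝ} (hS : S ∈ G.model) : S.PosSemidef := by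
  obtain ⟨L, Ω, -, hΩ, rfl⟩ := hS
  exact hΩ.1.posSemidef.conjTranspose_mul_mul_same (1 - L)⁻¹

lemma Acyclic.isUnit_one_sub (hG : G.Acyclic) {L : Matrix V V ℝ} (hL : G.LamCompat L) :
    IsUnit (1 - L) := by
  rw [← vecMul_injective_iff_isUnit, ← coe_vecMulLinear, ← LinearMap.ker_eq_bot,
    LinearMap.ker_eq_bot']
  intro x hx
  have hfix (v : V) : x v = ∑ u, x u * L u v := by
    simpa [vecMul_sub, sub_eq_zero, vecMul, dotProduct] using congrFun hx v
  ext v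
  induction v using hG.wellFounded.induction with
  | h v ih =>
    refine (hfix v).trans (Finset.sum_eq_zero fun u _ => ?_)
    by_cases huv : G.D u v
    · simp [ih u huv]
    · simp [hL u v huv]

lemma Acyclic.det_one_sub_ne_zero (hG : G.Acyclic) {L : Matrix V V ℝ} (hL : G.LamCompat L) :
    (1 - L).det ≠ 0 :=
  ((isUnit_iff_isUnit_det _).1 (hG.isUnit_one_sub hL)).ne_zero

lemma Acyclic.mem_model_iff (hG : G.Acyclic) {S : Matrix V V ℝ} :
    S ∈ G.model ↔ ∃ L, G.LamCompat L ∧ G.OmCompat ((1 - L)ᵀ * S * (1 - L)) := by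
  constructor
  · rintro ⟨L, Ω, hL, hΩ, hS⟩
    exact ⟨L, hL, (eq_transpose_inv_mul_mul_inv_iff (hG.isUnit_one_sub hL)).1 hS ▸ hΩ⟩
  · rintro ⟨L, hL, hΩ⟩
    exact ⟨L, _, hL, hΩ, (eq_transpose_inv_mul_mul_inv_iff (hG.isUnit_one_sub hL)).2 rfl⟩

end Model

section Identification

/-- A rational formula for column `v` of `Λ` in terms of the covariance matrix that is defined at
the identity matrix: the entries of the column are the quotients `n u / d`. The denominator is
cleared, so that the defining identity holds on the whole model. -/
def IsColumnFormula (G : MixedGraph V) (v : V) (d : MvPolynomial (V × V) ℝ)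
    (n : V → MvPolynomial (V × V) ℝ) : Prop :=
  evalEntries 1 d ≠ 0 ∧ ∀ S L, G.LamCompat L → G.OmCompat ((1 - L)ᵀ * S * (1 - L)) →
    ∀ u, evalEntries S d * L u v = evalEntries S (n u)

lemma IsColumnFormula.evalEntries_one_numerator {v : V} {d : MvPolynomial (V × V) ℝ}
    {n : V → MvPolynomial (V × V) ℝ} (h : G.IsColumnFormula v d n) (u : V) :
    evalEntries 1 (n u) = 0 := by
  have hone : G.OmCompat ((1 - 0)ᵀ * 1 * (1 - 0)) := by
    simpa using ⟨PosDef.one, fun v w hvw _ _ => one_apply_ne hvw⟩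
  simpa using (h.2 1 0 (fun _ _ _ => rfl) hone u).symm

/-- The coefficient matrix of the linear system for column `v` of `Λ`. Its row at a parent `u` of
`v` represents row `u` of `(1 - Λ)ᵀ * Σ` multiplied by `d u`; its other rows say that the
corresponding entries of the column vanish. -/
noncomputable def columnSystem (G : MixedGraph V) (d : V → MvPolynomial (V × V) ℝ)
    (n : V → V → MvPolynomial (V × V) ℝ) (v : V) : Matrix V V (MvPolynomial (V × V) ℝ) :=
  open Classical in
  of fun u => if G.D u v then (clearedOneSub d n * mvPolynomialX V V ℝ) u else Pi.single u 1

/-- The right-hand side of the linear system with coefficient matrix `columnSystem`. -/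
noncomputable def columnRhs (G : MixedGraph V) (d : V → MvPolynomial (V × V) ℝ)
    (n : V → V → MvPolynomial (V × V) ℝ) (v : V) : V → MvPolynomial (V × V) ℝ :=
  open Classical in
  fun u => if G.D u v then (clearedOneSub d n * mvPolynomialX V V ℝ) u v else 0

variable {S L : Matrix V V ℝ} {d : V → MvPolynomial (V × V) ℝ}
  {n : V → V → MvPolynomial (V × V) ℝ} {u v : V}

lemma IsBAP.transpose_one_sub_mul_mul_apply (hG : G.IsBAP)
    (hΩ : G.OmCompat ((1 - L)ᵀ * S * (1 - L))) (huv : G.D u v) :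
    ((1 - L)ᵀ * S * L : Matrix V V ℝ) u v = ((1 - L)ᵀ * S : Matrix V V ℝ) u v := by
  have hne : u ≠ v := by
    rintro rfl
    exact hG.1 u (.single huv)
  have hB : ¬ G.B u v := fun hB => (hG.2 u v hne).2.1 ⟨huv, hB⟩
  have hzero := hΩ.2 u v hne hB fun hB' => hB (G.symm _ _ hB')
  rw [Matrix.mul_sub, Matrix.mul_one, Matrix.sub_apply, sub_eq_zero] at hzero
  exact hzero.symm

lemma IsBAP.columnSystem_mulVec (hG : G.IsBAP)
    (h : ∀ u, G.D u v → G.IsColumnFormula u (d u) (n u))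
    (hL : G.LamCompat L) (hΩ : G.OmCompat ((1 - L)ᵀ * S * (1 - L))) :
    (G.columnSystem d n v).map (evalEntries S) *ᵥ (fun u => L u v) =
      evalEntries S ∘ G.columnRhs d n v := by
  ext u
  by_cases huv : G.D u v
  · have hrow := evalEntries_clearedOneSub_mul_mvPolynomialX ((h u huv).2 S L hL hΩ)
    have hcol := hG.transpose_one_sub_mul_mul_apply hΩ huv
    rw [mul_apply] at hcol
    simp only [mulVec, dotProduct, columnSystem, columnRhs, huv, if_true, map_apply, of_apply,
      Function.comp_apply, hrow, mul_assoc, ← Finset.mul_sum, hcol]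
  · simp [mulVec, dotProduct, columnSystem, columnRhs, huv, hL u v huv, Pi.single_apply]

lemma evalEntries_one_det_columnSystem_ne_zero
    (h : ∀ u, G.D u v → G.IsColumnFormula u (d u) (n u)) :
    evalEntries 1 (G.columnSystem d n v).det ≠ 0 := by
  classical
  have hdiag : (evalEntries 1).mapMatrix (G.columnSystem d n v) =
      diagonal fun u => if G.D u v then evalEntries 1 (d u) else 1 := by
    ext u w
    by_cases huv : G.D u v
    · have hzero (k : V) :
          evalEntries 1 (d u) * (0 : Matrix V V ℝ) k u = evalEntries 1 (n u k) := by
        simp [(h u huv).evalEntries_one_numerator k]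
      have hrow := evalEntries_clearedOneSub_mul_mvPolynomialX hzero w
      simpa [columnSystem, huv, diagonal_apply, one_apply] using hrow
    · simp [columnSystem, huv, diagonal_apply, Pi.single_apply, eq_comm]
  rw [RingHom.map_det, hdiag, det_diagonal, Finset.prod_ne_zero_iff]
  intro u _
  split_ifs with huv
  · exact (h u huv).1
  · exact one_ne_zero

lemma IsBAP.isColumnFormula_cramer (hG : G.IsBAP)
    (h : ∀ u, G.D u v → G.IsColumnFormula u (d u) (n u)) :
    G.IsColumnFormula v (G.columnSystem d n v).det
      ((G.columnSystem d n v).cramer (G.columnRhs d n v)) := by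
  refine ⟨evalEntries_one_det_columnSystem_ne_zero h, fun S L hL hΩ u => ?_⟩
  rw [cramer_eq_adjugate_mulVec, RingHom.map_mulVec, ← hG.columnSystem_mulVec h hL hΩ,
    ← RingHom.mapMatrix_apply, ← RingHom.mapMatrix_apply, RingHom.map_adjugate, mulVec_mulVec,
    adjugate_mul, RingHom.map_det, smul_mulVec, one_mulVec, Pi.smul_apply, smul_eq_mul]

lemma IsBAP.exists_isColumnFormula (hG : G.IsBAP) (v : V) : ∃ d n, G.IsColumnFormula v d n := by
  induction v using hG.1.wellFounded.induction with
  | h v ih =>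
    choose! d n h using ih
    exact ⟨_, _, hG.isColumnFormula_cramer h⟩

lemma Acyclic.evalEntries_eq_zero_of_mem_algModel (hG : G.Acyclic) (hS : S ∈ G.algModel)
    {p : MvPolynomial (V × V) ℝ}
    (hp : ∀ T L, G.LamCompat L → G.OmCompat ((1 - L)ᵀ * T * (1 - L)) → evalEntries T p = 0) :
    evalEntries S p = 0 := by
  refine hS p fun T hT => ?_
  obtain ⟨L, hL, hΩ⟩ := hG.mem_model_iff.1 hT
  exact hp T L hL hΩ

lemma Acyclic.mem_model_of_mem_algModel (hG : G.Acyclic)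
    (h : ∀ v, G.IsColumnFormula v (d v) (n v)) (hS : S ∈ G.algModel) (hpos : S.PosDef)
    (hd : ∀ v, evalEntries S (d v) ≠ 0) : S ∈ G.model := by
  let L : Matrix V V ℝ := of fun u v => evalEntries S (n v u) / evalEntries S (d v)
  have hL : G.LamCompat L := fun u v huv => by
    have hn : evalEntries S (n v u) = 0 :=
      hG.evalEntries_eq_zero_of_mem_algModel hS fun T L' hL' hΩ' => by
        rw [← (h v).2 T L' hL' hΩ' u, hL' u v huv, mul_zero]
    simp [L, hn]
  have hΩpos : ((1 - L)ᵀ * S * (1 - L)).PosDef :=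
    hpos.conjTranspose_mul_mul_same (mulVec_injective_of_isUnit (hG.isUnit_one_sub hL))
  refine hG.mem_model_iff.2 ⟨L, hL, hΩpos, fun v w hvw hB hB' => ?_⟩
  have hvanish : evalEntries S
      ((clearedOneSub d n * mvPolynomialX V V ℝ * (clearedOneSub d n)ᵀ) v w) = 0 :=
    hG.evalEntries_eq_zero_of_mem_algModel hS fun T L' hL' hΩ' => by
      rw [evalEntries_clearedOneSub_mul_mul_transpose fun u => (h u).2 T L' hL' hΩ',
        hΩ'.2 v w hvw hB hB', mul_zero]
  rw [evalEntries_clearedOneSub_mul_mul_transpose (L := L)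
    fun u k => mul_div_cancel₀ _ (hd u)] at hvanish
  simpa [hd] using hvanish

lemma IsBAP.exists_mem_model_of_mem_algModel (hG : G.IsBAP) :
    ∃ Q, evalEntries 1 Q ≠ 0 ∧
      ∀ S ∈ G.algModel, S.PosSemidef → evalEntries S Q ≠ 0 → S ∈ G.model := by
  choose d n h using hG.exists_isColumnFormula
  have hdet (S : Matrix V V ℝ) : evalEntries S (mvPolynomialX V V ℝ).det = S.det := by
    rw [RingHom.map_det, mvPolynomialX_mapMatrix_eval]
  refine ⟨(mvPolynomialX V V ℝ).det * ∏ v, d v, ?_, fun S hS hpos hQ => ?_⟩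
  · rw [map_mul, hdet, det_one, one_mul, map_prod]
    exact Finset.prod_ne_zero_iff.2 fun v _ => (h v).1
  · rw [map_mul, hdet, map_prod, mul_ne_zero_iff, Finset.prod_ne_zero_iff] at hQ
    exact hG.1.mem_model_of_mem_algModel h hS (hpos.posDef_iff_det_ne_zero.2 hQ.1)
      fun v => hQ.2 v (Finset.mem_univ v)

end Identification

section Density

lemma Acyclic.adjugate_transpose_mul_mul_adjugate_mem_model (hG : G.Acyclic)
    {L Ω : Matrix V V ℝ} (hL : G.LamCompat L) (hΩ : G.OmCompat Ω) :
    (1 - L).adjugateᵀ * Ω * (1 - L).adjugate ∈ G.model := by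
  have hdet : (1 - L).det ≠ 0 := hG.det_one_sub_ne_zero hL
  refine ⟨L, (1 - L).det ^ 2 • Ω, hL, ⟨hΩ.1.smul (by positivity), fun v w hvw hB hB' => ?_⟩, ?_⟩
  · simp [hΩ.2 v w hvw hB hB']
  · simp [inv_def, Ring.inverse_eq_inv', smul_smul, pow_two, hdet]

lemma Acyclic.map_eval_adjugatePath_mem_model (hG : G.Acyclic) {L Ω : Matrix V V ℝ}
    (hL : G.LamCompat L) (hΩ : G.OmCompat Ω) {t : ℝ} (ht : t ∈ Set.Ico 0 1) :
    (adjugatePath L Ω).map (Polynomial.eval t) ∈ G.model := by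
  rw [map_eval_adjugatePath]
  refine hG.adjugate_transpose_mul_mul_adjugate_mem_model (fun v w hvw => ?_)
    ⟨?_, fun v w hvw hB hB' => ?_⟩
  · simp [hL v w hvw]
  · exact (PosDef.one.smul (sub_pos.2 ht.2)).posSemidef_add (hΩ.1.posSemidef.smul ht.1)
  · simp [hΩ.2 v w hvw hB hB', hvw]

lemma Acyclic.exists_adjugatePath_map_eval_one_eq (hG : G.Acyclic) {S : Matrix V V ℝ}
    (hS : S ∈ G.model) :
    ∃ L Ω, G.LamCompat L ∧ G.OmCompat Ω ∧ (adjugatePath L Ω).map (Polynomial.eval 1) = S := by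
  obtain ⟨L, Ω, hL, hΩ, rfl⟩ := hS
  have hdet : (1 - L).det ≠ 0 := hG.det_one_sub_ne_zero hL
  refine ⟨L, (1 - L).det⁻¹ ^ 2 • Ω, hL,
    ⟨hΩ.1.smul (by positivity), fun v w hvw hB hB' => ?_⟩, ?_⟩
  · simp [hΩ.2 v w hvw hB hB']
  · simp [map_eval_adjugatePath, inv_def, Ring.inverse_eq_inv', smul_smul, pow_two]

lemma Acyclic.model_subset_closure_evalEntries_ne_zero (hG : G.Acyclic)
    {q : MvPolynomial (V × V) ℝ} (hq : evalEntries 1 q ≠ 0) :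
    G.model ⊆ closure {S ∈ G.model | evalEntries S q ≠ 0} := by
  intro S hS
  obtain ⟨L, Ω, hL, hΩ, rfl⟩ := hG.exists_adjugatePath_map_eval_one_eq hS
  set P := adjugatePath L Ω with hP
  have hP_tendsto : Filter.Tendsto (fun t => P.map (Polynomial.eval t)) (𝓝[<] 1)
      (𝓝 (P.map (Polynomial.eval 1))) :=
    (continuous_matrix fun i j => (P i j).continuous).continuousAt.mono_left nhdsWithin_le_nhds
  have hq_ne : MvPolynomial.aeval (fun e => P e.1 e.2) q ≠ 0 := fun h => hq <| by
    have hP_zero : P.map (Polynomial.eval 0) = 1 := by simp [hP, map_eval_adjugatePath]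
    rw [← hP_zero, ← eval_aeval_entries, h, Polynomial.eval_zero]
  refine mem_closure_of_tendsto hP_tendsto ?_
  filter_upwards [Ico_mem_nhdsLT zero_lt_one,
    nhdsLT_le_nhdsNE 1 (eventually_nhdsNE_eval_ne_zero hq_ne 1)] with t ht hqt
  exact ⟨hG.map_eval_adjugatePath_mem_model hL hΩ ht, eval_aeval_entries P q t ▸ hqt⟩

end Density

end MixedGraph

open MixedGraph in
theorem closure_model_subset_iff_algModel_subset_general
    {V : Type*} [Fintype V] [DecidableEq V] (G G' : MixedGraph V)
    (hG : G.Acyclic) (hG' : G'.IsBAP) :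
    closure G.model ⊆ closure G'.model ↔ G.algModel ⊆ G'.algModel := by
  rw [algModel_subset_algModel_iff]
  constructor
  · intro h
    exact subset_closure.trans (h.trans closure_model_subset_algModel)
  · intro h
    obtain ⟨Q, hQ, hmem⟩ := hG'.exists_mem_model_of_mem_algModel
    have hgeneric : {S ∈ G.model | evalEntries S Q ≠ 0} ⊆ G'.model :=
      fun S ⟨hS, hSQ⟩ => hmem S (h hS) (posSemidef_of_mem_model hS) hSQ
    have hdense := hG.model_subset_closure_evalEntries_ne_zero hQ
    exact closure_minimal (hdense.trans (closure_mono hgeneric)) isClosed_closure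

/-- Theorem 4: For BAPs `G, G'`, the Euclidean closure of `M(G)` is
contained in the Euclidean closure of `M(G')` iff `A(G) ⊆ A(G')`. -/
theorem closure_model_subset_iff_algModel_subset
    {V : Type*} [Fintype V] [DecidableEq V]
    (G G' : MixedGraph V) (hG : G.IsBAP) (hG' : G'.IsBAP) :
    closure (G.model) ⊆ closure (G'.model) ↔ G.algModel ⊆ G'.algModel :=
  closure_model_subset_iff_algModel_subset_general G G' hG.1 hG'
end

section
/- Let F be a finite field, n : ℕ, V = Fin n, and let (D, B) be an acyclic mixed graph on V. In R = MvPolynomial ((V × V) ⊕ (V × V)) F define symbolic matrices Λ̂, Ω̂ : Matrix V V R by: Λ̂ v w = X (Sum.inl (v,w)) if D v w, and Λ̂ v w = 0 otherwise; Ω̂ v v = X (Sum.inr (v,v)); and for v ≠ w, Ω̂ v w = X (Sum.inr (min v w, max v w)) if B v w, and 0 otherwise. Let ℓ : ℕ satisfy Λ̂ ^ (ℓ + 1) = 0 (ℓ bounds the length of the longest directed path), set Σ̂ = (∑_{i=0}^{ℓ} (Λ̂ᵀ) ^ i) * Ω̂ * (∑_{j=0}^{ℓ} Λ̂ ^ j),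 and for f : MvPolynomial (V × V) F set g = MvPolynomial.aeval (fun e => Σ̂ e.1 e.2) f ∈ R. If g ≠ 0, then the number of assignments x : ((V × V) ⊕ (V × V)) → F with MvPolynomial.eval x g = 0 is at most (2ℓ + 1) · f.totalDegree · |F| ^ (2 n ^ 2 − 1). (The error-probability bound of Theorem 2.) -/
open Matrix MvPolynomial

/-!
Each entry of the truncated series `∑ i ≤ ℓ, Λ ^ i` has degree at most `ℓ` in the edge variables,
and `Ω` contributes one more, so the entries of `Σ` have degree at most `2 * ℓ + 1` and `f(Σ)` has
degree at most `(2 * ℓ + 1) * deg f`. The Schwartz–Zippel lemma bounds the number of zeros of a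
nonzero polynomial in terms of its degree.
-/

section SchwartzZippel

open Finset Fintype

variable {σ R : Type*} [Fintype σ] [DecidableEq σ] [CommRing R] [IsDomain R] [DecidableEq R]

theorem card_filter_eval_eq_zero_div_le {p : MvPolynomial σ R} (hp : p ≠ 0) (S : Finset R) :
    (#{x ∈ piFinset fun _ : σ ↦ S | eval x p = 0} / #S ^ card σ : ℚ≥0) ≤ p.totalDegree / #S := by
  let e := equivFin σ
  have he : rename e p ≠ 0 := (map_ne_zero_iff _ (rename_injective e e.injective)).2 hp
  have hcard : #{x ∈ piFinset fun _ : σ ↦ S | eval x p = 0} =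
      #{y ∈ piFinset fun _ : Fin (card σ) ↦ S | eval y (rename e p) = 0} :=
    card_equiv (e.arrowCongr (Equiv.refl R)) fun x ↦ by
      simp [eval_rename, Function.comp_def, e.forall_congr_left]
  calc (#{x ∈ piFinset fun _ : σ ↦ S | eval x p = 0} / #S ^ card σ : ℚ≥0)
      ≤ (rename e p).totalDegree / #S := hcard ▸ schwartz_zippel_totalDegree he S
    _ ≤ p.totalDegree / #S := by gcongr; exact totalDegree_rename_le e p

theorem card_filter_eval_eq_zero_le {p : MvPolynomial σ R} (hp : p ≠ 0) (S : Finset R) :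
    #{x ∈ piFinset fun _ : σ ↦ S | eval x p = 0} ≤ p.totalDegree * #S ^ (card σ - 1) := by
  cases isEmpty_or_nonempty σ with
  | inl _ =>
    obtain ⟨c, rfl⟩ := C_surjective σ p
    simp_all
  | inr _ =>
    rcases S.eq_empty_or_nonempty with rfl | hS
    · simp
    have hS₀ : (0 : ℚ≥0) < #S := by exact_mod_cast hS.card_pos
    have hdiv := card_filter_eval_eq_zero_div_le hp S
    rw [← pow_sub_one_mul card_ne_zero, ← div_div, div_le_div_iff_of_pos_right hS₀,
      div_le_iff₀ (pow_pos hS₀ _)] at hdiv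
    exact_mod_cast hdiv

end SchwartzZippel

theorem totalDegree_aeval_le {σ τ R A : Type*} [CommSemiring R] [CommSemiring A] [Algebra R A]
    {s : σ → MvPolynomial τ A} {d : ℕ} (hs : ∀ i, (s i).totalDegree ≤ d) (f : MvPolynomial σ R) :
    (aeval s f).totalDegree ≤ d * f.totalDegree := by
  rw [aeval_def, eval₂_eq]
  refine totalDegree_finsetSum_le fun m hm ↦ ?_
  calc (algebraMap R (MvPolynomial τ A) (f.coeff m) * ∏ i ∈ m.support, s i ^ m i).totalDegree
      ≤ (∏ i ∈ m.support, s i ^ m i).totalDegree := by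
        simpa [MvPolynomial.algebraMap_apply] using
          totalDegree_mul (C (algebraMap R A (f.coeff m))) (∏ i ∈ m.support, s i ^ m i)
    _ ≤ ∑ i ∈ m.support, (s i ^ m i).totalDegree := totalDegree_finsetProd _ _
    _ ≤ ∑ i ∈ m.support, m i * d := by
        gcongr with i
        exact (totalDegree_pow _ _).trans (by gcongr; exact hs i)
    _ = d * m.sum fun _ k ↦ k := by rw [← Finset.sum_mul, mul_comm, Finsupp.sum]
    _ ≤ d * f.totalDegree := by gcongr; exact le_totalDegree hm

section MatrixDegree

variable {ι κ μ σ R : Type*} [CommSemiring R]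

theorem totalDegree_matrix_mul_le [Fintype κ] {M : Matrix ι κ (MvPolynomial σ R)}
    {N : Matrix κ μ (MvPolynomial σ R)} {a b : ℕ} (hM : ∀ i j, (M i j).totalDegree ≤ a)
    (hN : ∀ i j, (N i j).totalDegree ≤ b) (i : ι) (j : μ) :
    ((M * N) i j).totalDegree ≤ a + b := by
  rw [Matrix.mul_apply]
  exact totalDegree_finsetSum_le fun k _ ↦
    (totalDegree_mul _ _).trans (Nat.add_le_add (hM i k) (hN k j))

variable [Fintype ι] [DecidableEq ι] {M N : Matrix ι ι (MvPolynomial σ R)} {a b : ℕ}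

theorem totalDegree_matrix_pow_le (hM : ∀ i j, (M i j).totalDegree ≤ a) (k : ℕ) (i j : ι) :
    ((M ^ k) i j).totalDegree ≤ k * a := by
  induction k generalizing i j with
  | zero =>
    rw [pow_zero, Matrix.one_apply]
    split_ifs <;> simp
  | succ k ih =>
    rw [pow_succ, Nat.succ_mul]
    exact totalDegree_matrix_mul_le ih hM i j

theorem totalDegree_matrix_geom_sum_le (hM : ∀ i j, (M i j).totalDegree ≤ a) (ℓ : ℕ) (i j : ι) :
    ((∑ k ∈ Finset.range (ℓ + 1), M ^ k) i j).totalDegree ≤ ℓ * a := by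
  rw [Matrix.sum_apply]
  refine totalDegree_finsetSum_le fun k hk ↦ (totalDegree_matrix_pow_le hM k i j).trans ?_
  gcongr
  exact Finset.mem_range_succ_iff.1 hk

/-- The covariance matrix `(1 - M)⁻ᵀ * N * (1 - M)⁻¹` of a linear structural equation model with
edge weights `M` and noise covariance `N`, where `(1 - M)⁻¹` is replaced by `∑ j ≤ ℓ, M ^ j`. The
two agree when `M ^ (ℓ + 1) = 0`; the truncation keeps the entries polynomial for every `M`. -/
noncomputable def truncatedCovariance (M N : Matrix ι ι (MvPolynomial σ R)) (ℓ : ℕ) :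
    Matrix ι ι (MvPolynomial σ R) :=
  (∑ i ∈ Finset.range (ℓ + 1), Mᵀ ^ i) * N * ∑ j ∈ Finset.range (ℓ + 1), M ^ j

theorem totalDegree_truncatedCovariance_le (hM : ∀ i j, (M i j).totalDegree ≤ a)
    (hN : ∀ i j, (N i j).totalDegree ≤ b) (ℓ : ℕ) (i j : ι) :
    (truncatedCovariance M N ℓ i j).totalDegree ≤ 2 * ℓ * a + b :=
  calc (truncatedCovariance M N ℓ i j).totalDegree
      ≤ ℓ * a + b + ℓ * a :=
        totalDegree_matrix_mul_le (totalDegree_matrix_mul_le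
          (totalDegree_matrix_geom_sum_le (fun v w ↦ hM w v) ℓ) hN)
          (totalDegree_matrix_geom_sum_le hM ℓ) i j
    _ = 2 * ℓ * a + b := by ring

end MatrixDegree

theorem schwartz_zippel_bound_for_constraint_general {V σ R : Type*} [Fintype V] [DecidableEq V]
    [Fintype σ] [DecidableEq σ] [CommRing R] [IsDomain R] [DecidableEq R]
    {Lam Om : Matrix V V (MvPolynomial σ R)} {a b : ℕ}
    (hLam : ∀ v w, (Lam v w).totalDegree ≤ a) (hOm : ∀ v w, (Om v w).totalDegree ≤ b)
    (ℓ : ℕ) (f : MvPolynomial (V × V) R)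
    (hne : aeval (fun e : V × V ↦ truncatedCovariance Lam Om ℓ e.1 e.2) f ≠ 0) (S : Finset R) :
    ((Fintype.piFinset fun _ : σ ↦ S).filter fun x ↦
        eval x (aeval (fun e : V × V ↦ truncatedCovariance Lam Om ℓ e.1 e.2) f) = 0).card
      ≤ (2 * ℓ * a + b) * f.totalDegree * S.card ^ (Fintype.card σ - 1) := by
  have hSig : ∀ e : V × V,
      (truncatedCovariance Lam Om ℓ e.1 e.2).totalDegree ≤ 2 * ℓ * a + b :=
    fun e ↦ totalDegree_truncatedCovariance_le hLam hOm ℓ e.1 e.2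
  exact (card_filter_eval_eq_zero_le hne S).trans
    (Nat.mul_le_mul_right _ (totalDegree_aeval_le hSig f))

/-- error-probability bound of Theorem 2, Schwartz–Zippel bound:
For an acyclic mixed graph `(D, B)` on `Fin n`, with symbolic parameter matrices
`Λ̂, Ω̂` over the polynomial ring `R = MvPolynomial ((V × V) ⊕ (V × V)) F`,
`Σ̂ = (∑ i ≤ ℓ, (Λ̂ᵀ)^i) * Ω̂ * (∑ j ≤ ℓ, Λ̂^j)` the symbolic covariance matrix, and
`g = f(Σ̂)` nonzero, the number of evaluation points `x` at which `g` vanishes is at most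
`(2ℓ + 1) · deg f · |F| ^ (2 n² − 1)`. -/
theorem schwartz_zippel_bound_for_constraint
    {F : Type*} [Field F] [Fintype F] [DecidableEq F] {n : ℕ}
    (D B : Fin n → Fin n → Prop)
    [∀ v w, Decidable (D v w)] [∀ v w, Decidable (B v w)]
    (hBsymm : ∀ v w, B v w → B w v) (hBirrefl : ∀ v, ¬ B v v)
    (hAcyclic : ∀ v, ¬ Relation.TransGen D v v)
    (Lam Om : Matrix (Fin n) (Fin n)
      (MvPolynomial ((Fin n × Fin n) ⊕ (Fin n × Fin n)) F))
    (hLam : ∀ v w, Lam v w = if D v w then X (Sum.inl (v, w)) else 0)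
    (hOmDiag : ∀ v, Om v v = X (Sum.inr (v, v)))
    (hOmOff : ∀ v w, v ≠ w →
      Om v w = if B v w then X (Sum.inr (min v w, max v w)) else 0)
    (ℓ : ℕ) (hNil : Lam ^ (ℓ + 1) = 0)
    (f : MvPolynomial (Fin n × Fin n) F)
    (Sig : Matrix (Fin n) (Fin n)
      (MvPolynomial ((Fin n × Fin n) ⊕ (Fin n × Fin n)) F))
    (hSig : Sig = (∑ i ∈ Finset.range (ℓ + 1), (Lamᵀ) ^ i) * Om *
      (∑ j ∈ Finset.range (ℓ + 1), Lam ^ j))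
    (g : MvPolynomial ((Fin n × Fin n) ⊕ (Fin n × Fin n)) F)
    (hg : g = MvPolynomial.aeval (fun e : Fin n × Fin n => Sig e.1 e.2) f)
    (hgne : g ≠ 0) :
    (Finset.univ.filter
        (fun x : ((Fin n × Fin n) ⊕ (Fin n × Fin n)) → F =>
          MvPolynomial.eval x g = 0)).card
      ≤ (2 * ℓ + 1) * f.totalDegree * Fintype.card F ^ (2 * n ^ 2 - 1) := by
  change Sig = truncatedCovariance Lam Om ℓ at hSig
  subst hSig hg
  have hLamDeg : ∀ v w, (Lam v w).totalDegree ≤ 1 := fun v w ↦ by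
    rw [hLam]
    split_ifs <;> simp
  have hOmDeg : ∀ v w, (Om v w).totalDegree ≤ 1 := fun v w ↦ by
    rcases eq_or_ne v w with rfl | hvw
    · simp [hOmDiag]
    · rw [hOmOff v w hvw]
      split_ifs <;> simp
  have hcardVars : Fintype.card ((Fin n × Fin n) ⊕ (Fin n × Fin n)) = 2 * n ^ 2 := by
    simp only [Fintype.card_sum, Fintype.card_prod, Fintype.card_fin]
    ring
  simpa only [Fintype.piFinset_univ, Finset.card_univ, hcardVars, mul_one] using
    schwartz_zippel_bound_for_constraint_general hLamDeg hOmDeg ℓ f hgne Finset.univ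
end

section
/- Let k be a field, n : ℕ, and R = MvPolynomial (Fin n) k. Let P be a prime ideal of R and J an ideal of R with ¬ (J ≤ P). Then the Krull dimension of R ⧸ (P ⊔ J) is strictly smaller than the Krull dimension of R ⧸ P: ringKrullDim (R ⧸ (P ⊔ J)) < ringKrullDim (R ⧸ P). (The commutative-algebra content of the dimension argument in Theorem 1: intersecting an irreducible variety with an algebraic set that does not contain it strictly drops the dimension.) -/
/-!
Modulo `P`, any `x ∈ J` outside `P` becomes a nonzero element of a domain, hence a non-zero-divisor,
and killing a non-zero-divisor lowers the Krull dimension by at least one: a chain of primes that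
contain `x` can be extended downwards by a minimal prime. The inequality `d + 1 ≤ e` between the two
dimensions still allows `d = e = ⊤`; it forces `d < e` here because an algebra of finite type over a
field has finite dimension.
-/

open scoped nonZeroDivisors

theorem ringKrullDim_quotient_sup_add_one_le_of_mem_nonZeroDivisors {R : Type*} [CommRing R]
    (I : Ideal R) {J : Ideal R} {x : R} (hxJ : x ∈ J) (hx : Ideal.Quotient.mk I x ∈ (R ⧸ I)⁰) :
    ringKrullDim (R ⧸ (I ⊔ J)) + 1 ≤ ringKrullDim (R ⧸ I) :=
  ringKrullDim_succ_le_of_surjective (Ideal.Quotient.factor le_sup_left)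
    (Ideal.Quotient.factor_surjective le_sup_left) hx
    (Ideal.Quotient.eq_zero_iff_mem.mpr (Ideal.mem_sup_right hxJ))

theorem ringKrullDim_quotient_sup_add_one_le_of_isPrime {R : Type*} [CommRing R] {P J : Ideal R}
    [P.IsPrime] (hJ : ¬ J ≤ P) : ringKrullDim (R ⧸ (P ⊔ J)) + 1 ≤ ringKrullDim (R ⧸ P) := by
  obtain ⟨x, hxJ, hxP⟩ := SetLike.not_le_iff_exists.mp hJ
  exact ringKrullDim_quotient_sup_add_one_le_of_mem_nonZeroDivisors P hxJ <|
    mem_nonZeroDivisors_of_ne_zero (mt Ideal.Quotient.eq_zero_iff_mem.mp hxP)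

theorem finiteRingKrullDim_iff_exists_eq_natCast {R : Type*} [CommSemiring R] :
    FiniteRingKrullDim R ↔ ∃ d : ℕ, ringKrullDim R = d := by
  refine ⟨fun _ ↦ ⟨_, Order.krullDim_eq_length_of_finiteDimensionalOrder⟩, fun ⟨d, hd⟩ ↦ ?_⟩
  rw [finiteRingKrullDim_iff_ne_bot_and_top, hd]
  exact ⟨WithBot.coe_ne_bot, mt WithBot.coe_eq_top.mp (ENat.natCast_ne_top d)⟩

theorem finiteRingKrullDim_of_surjective {R S : Type*} [CommSemiring R] [CommSemiring S]
    [FiniteRingKrullDim R] [Nontrivial S] (f : R →+* S) (hf : Function.Surjective f) :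
    FiniteRingKrullDim S :=
  finiteRingKrullDim_iff_ne_bot_and_top.mpr
    ⟨ne_bot_of_le_ne_bot WithBot.zero_ne_bot ringKrullDim_nonneg_of_nontrivial,
      ne_top_of_le_ne_top ringKrullDim_ne_top (ringKrullDim_le_of_surjective f hf)⟩

theorem finiteRingKrullDim_mvPolynomial (σ R : Type*) [Finite σ] [CommRing R] [IsNoetherianRing R]
    [FiniteRingKrullDim R] : FiniteRingKrullDim (MvPolynomial σ R) := by
  obtain ⟨d, hd⟩ := finiteRingKrullDim_iff_exists_eq_natCast.mp ‹FiniteRingKrullDim R›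
  refine finiteRingKrullDim_iff_exists_eq_natCast.mpr ⟨d + Nat.card σ, ?_⟩
  rw [MvPolynomial.ringKrullDim_of_isNoetherianRing, hd, Nat.cast_add]

theorem finiteRingKrullDim_of_finiteType (R A : Type*) [CommRing R] [IsNoetherianRing R]
    [FiniteRingKrullDim R] [CommRing A] [Nontrivial A] [Algebra R A] [Algebra.FiniteType R A] :
    FiniteRingKrullDim A := by
  obtain ⟨n, f, hf⟩ := Algebra.FiniteType.iff_quotient_mvPolynomial''.mp ‹Algebra.FiniteType R A›
  have := finiteRingKrullDim_mvPolynomial (Fin n) R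
  exact finiteRingKrullDim_of_surjective f.toRingHom hf

theorem ringKrullDim_quotient_sup_lt_general {R : Type*} [CommRing R] (P J : Ideal R) [P.IsPrime]
    [FiniteRingKrullDim (R ⧸ P)] (hJ : ¬ J ≤ P) :
    ringKrullDim (R ⧸ (P ⊔ J)) < ringKrullDim (R ⧸ P) := by
  have h := ringKrullDim_quotient_sup_add_one_le_of_isPrime hJ
  obtain ⟨d, hd⟩ := finiteRingKrullDim_iff_exists_eq_natCast.mp ‹FiniteRingKrullDim (R ⧸ P)›
  rw [hd] at h ⊢
  exact ENat.WithBot.add_one_le_natCast_iff.mp h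

/-- dimension argument of Theorem 1: in the polynomial ring
`R = MvPolynomial (Fin n) k`, if `P` is a prime ideal and `J` an ideal with `¬ J ≤ P`,
then the Krull dimension of `R ⧸ (P ⊔ J)` is strictly smaller than that of `R ⧸ P`. -/
theorem ringKrullDim_quotient_sup_lt
    {k : Type*} [Field k] {n : ℕ}
    (P J : Ideal (MvPolynomial (Fin n) k)) [P.IsPrime] (hJ : ¬ J ≤ P) :
    ringKrullDim (MvPolynomial (Fin n) k ⧸ (P ⊔ J)) <
      ringKrullDim (MvPolynomial (Fin n) k ⧸ P) := by
  have := finiteRingKrullDim_of_finiteType k (MvPolynomial (Fin n) k ⧸ P)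
  exact ringKrullDim_quotient_sup_lt_general P J hJ
end
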